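/- arXiv:1811.06413 — 7 statements merged into one kernel-verified Lean document; each statement's English description precedes it below -/
import Mathlib

section
/- For every reduced affine monoid S, the catenary degree c(S) equals c'(S), where c'(S) is the minimal non-negative integer d such that there exists a generating set Λ ⊆ M × M of the defining congruence ∼_S satisfying |α| ≤ d and |γ| ≤ d for all pairs (x^α, x^γ) ∈ Λ. -/
/-!
The two sets of admissible bounds `d` whose infima are compared coincide.

Call `α → γ` a `d`-step if `fac α = fac γ` and `dDist α γ ≤ d`. Adding a common vector to both ends
changes neither condition, so connectedness by `d`-steps is a congruence on `FreeExp S`. A pair of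
`∼_S` whose components have length at most `d` is itself a `d`-step; hence if such pairs generate
`∼_S`, then all of `∼_S` lies in the connectedness congruence (`chainConn_of_rel`).

Conversely, let `Λ` be the set of all pairs of `∼_S` with components of length at most `d`. By
cancellativity, removing the gcd from both ends of a `d`-step gives a pair in `Λ`, so every `d`-step,
and hence every `d`-chain, lies in the congruence generated by `Λ`.
-/


/-! ## Common definitions: atoms, factorizations, catenary degrees -/

/-- An atom of an additive commutative monoid: a nonzero element that cannot be
written as a sum of two nonzero elements. -/
def IsAtm {S : Type*} [AddCommMonoid S] (a : S) : Prop :=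
  a ≠ 0 ∧ ∀ b c : S, a = b + c → b = 0 ∨ c = 0

/-- The set of atoms of an additive commutative monoid. -/
def Atoms (S : Type*) [AddCommMonoid S] : Set S := {a | IsAtm a}

/-- Exponent vectors: the free commutative monoid on the set of atoms (written additively). -/
abbrev FreeExp (S : Type*) [AddCommMonoid S] := ↥(Atoms S) →₀ ℕ

/-- The factorization homomorphism, sending an exponent vector `α` to `a^α ∈ S`. -/
def fac {S : Type*} [AddCommMonoid S] (α : FreeExp S) : S :=
  α.sum fun a n => n • (a : S)

lemma fac_add {S : Type*} [AddCommMonoid S] (α β : FreeExp S) :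
    fac (α + β) = fac α + fac β :=
  Finsupp.sum_add_index' (fun _ => zero_nsmul _) (fun a m n => add_nsmul (a : S) m n)

/-- Total degree (length) `|α|` of an exponent vector. -/
def degE {σ : Type*} (α : σ →₀ ℕ) : ℕ := α.sum fun _ n => n

/-- Pointwise minimum (the gcd in the free commutative monoid). -/
noncomputable def gcdE {σ : Type*} (α β : σ →₀ ℕ) : σ →₀ ℕ :=
  Finsupp.zipWith min (min_self 0) α β

/-- The distance `d(α,γ)` between two exponent vectors. -/
noncomputable def dDist {σ : Type*} (α β : σ →₀ ℕ) : ℕ :=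
  max (degE (α - gcdE α β)) (degE (β - gcdE α β))

/-- `α` and `γ` can be connected by a `d`-chain. -/
def ChainConn {S : Type*} [AddCommMonoid S] (d : ℕ) (α γ : FreeExp S) : Prop :=
  ∃ (k : ℕ) (c : ℕ → FreeExp S), c 0 = α ∧ c k = γ ∧
    ∀ j < k, fac (c j) = fac (c (j + 1)) ∧ dDist (c j) (c (j + 1)) ≤ d

/-- The catenary degree of `S`. -/
noncomputable def catDeg (S : Type*) [AddCommMonoid S] : ℕ :=
  sInf {d | ∀ α γ : FreeExp S, fac α = fac γ → ChainConn d α γ}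

/-- Graded degree `|α|_gr` of an exponent vector, w.r.t. a weight (grading) `w` on `S`. -/
def gdegE {S : Type*} [AddCommMonoid S] (w : S → ℕ) (α : FreeExp S) : ℕ :=
  α.sum fun a n => n * w (a : S)

/-- The graded distance `d_gr(α,γ)`. -/
noncomputable def dDistGr {S : Type*} [AddCommMonoid S] (w : S → ℕ) (α β : FreeExp S) : ℕ :=
  max (gdegE w (α - gcdE α β)) (gdegE w (β - gcdE α β))

/-- `α` and `γ` can be connected by a chain of weight at most `d`. -/
def ChainConnGr {S : Type*} [AddCommMonoid S] (w : S → ℕ) (d : ℕ) (α γ : FreeExp S) : Prop :=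
  ∃ (k : ℕ) (c : ℕ → FreeExp S), c 0 = α ∧ c k = γ ∧
    ∀ j < k, fac (c j) = fac (c (j + 1)) ∧ dDistGr w (c j) (c (j + 1)) ≤ d

/-- The graded catenary degree of `S` w.r.t. the grading `w`. -/
noncomputable def catDegGr (S : Type*) [AddCommMonoid S] (w : S → ℕ) : ℕ :=
  sInf {d | ∀ α γ : FreeExp S, fac α = fac γ → ChainConnGr w d α γ}

/-- The defining congruence `∼_S` of `S` on the free commutative monoid on the atoms. -/
def defCon (S : Type*) [AddCommMonoid S] : AddCon (FreeExp S) where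
  r α β := fac α = fac β
  iseqv := ⟨fun _ => rfl, Eq.symm, Eq.trans⟩
  add' := fun {a b c d} h1 h2 => by
    have h1' : fac a = fac b := h1
    have h2' : fac c = fac d := h2
    show fac (a + c) = fac (b + d)
    rw [fac_add, fac_add, h1', h2']

/-- A reduced affine monoid: commutative, cancellative, a finitely generated monoid embedding
into a finitely generated free abelian group, whose only unit is the identity. -/
class IsReducedAffine (S : Type*) [AddCommMonoid S] : Prop where
  cancel : ∀ a b c : S, a + b = a + c → b = c
  affine : ∃ (k : ℕ) (f : S →+ (Fin k → ℤ)), Function.Injective f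
  fg : AddMonoid.FG S
  reduced : ∀ s : S, IsAddUnit s → s = 0

/-! ## The tilde construction -/

/-- The atoms of `S̃`: pairs `a[i]` with `a` an atom of `S` and `0 ≤ i ≤ |a|`. -/
def ATil (S : Type*) [AddCommMonoid S] (w : S → ℕ) : Type _ :=
  {p : ↥(Atoms S) × ℕ // p.2 ≤ w (p.1 : S)}

/-- Constructor `a[i]` for atoms of `S̃`. -/
def atil {S : Type*} [AddCommMonoid S] (w : S → ℕ) (a : ↥(Atoms S)) (i : ℕ)
    (h : i ≤ w (a : S)) : ATil S w := ⟨(a, i), h⟩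

/-- The map `κ : ℕ₀^{𝒜(S̃)} → ℕ₀^{𝒜(S)}`, `κ(λ)(a) = Σ_i λ(a[i])`. -/
noncomputable def kap (S : Type*) [AddCommMonoid S] (w : S → ℕ) :
    (ATil S w →₀ ℕ) → FreeExp S :=
  Finsupp.mapDomain fun p => p.val.1

/-- The map `δ : ℕ₀^{𝒜(S̃)} → ℕ₀`, `δ(λ) = Σ i·λ(a[i])`. -/
def delt {S : Type*} [AddCommMonoid S] (w : S → ℕ) (l : ATil S w →₀ ℕ) : ℕ :=
  l.sum fun p n => n * p.val.2

lemma kap_add {S : Type*} [AddCommMonoid S] (w : S → ℕ) (l m : ATil S w →₀ ℕ) :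
    kap S w (l + m) = kap S w l + kap S w m := Finsupp.mapDomain_add

lemma delt_add {S : Type*} [AddCommMonoid S] (w : S → ℕ) (l m : ATil S w →₀ ℕ) :
    delt w (l + m) = delt w l + delt w m :=
  Finsupp.sum_add_index' (fun _ => zero_mul _) (fun _ m n => add_mul m n _)

/-- The defining congruence of `S̃` (under the identification `𝒜(S̃) = {a[i]}`,
`x^λ ∼_{S̃} x^μ` iff `a^{κλ} = a^{κμ}` in `S` and `δλ = δμ`). -/
def defConTil (S : Type*) [AddCommMonoid S] (w : S → ℕ) : AddCon (ATil S w →₀ ℕ) where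
  r l m := fac (kap S w l) = fac (kap S w m) ∧ delt w l = delt w m
  iseqv := ⟨fun _ => ⟨rfl, rfl⟩, fun h => ⟨h.1.symm, h.2.symm⟩,
    fun h h' => ⟨h.1.trans h'.1, h.2.trans h'.2⟩⟩
  add' := fun h1 h2 =>
    ⟨by rw [kap_add, kap_add, fac_add, fac_add, h1.1, h2.1],
     by rw [delt_add, delt_add, h1.2, h2.2]⟩

/-- The quadratic relations `(x_{a[k]} x_{b[l]}, x_{a[k+1]} x_{b[l-1]})`,
for `a, b ∈ 𝒜(S)`, `0 ≤ k ≤ |a| - 1`, `1 ≤ l ≤ |b|`. -/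
def quadRel (S : Type*) [AddCommMonoid S] (w : S → ℕ) :
    (ATil S w →₀ ℕ) → (ATil S w →₀ ℕ) → Prop := fun x y =>
  ∃ (a b : ↥(Atoms S)) (k l : ℕ) (hk : k + 1 ≤ w (a : S)) (_ : 1 ≤ l) (hl : l ≤ w (b : S)),
    x = Finsupp.single (atil w a k (Nat.le_of_succ_le hk)) 1 +
        Finsupp.single (atil w b l hl) 1 ∧
    y = Finsupp.single (atil w a (k + 1) hk) 1 +
        Finsupp.single (atil w b (l - 1) (le_trans (Nat.sub_le l 1) hl)) 1

/-! ## Block monoids -/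

/-- The block monoid `ℬ(g)` of a tuple `g = (g₁,…,g_m)` of elements of a commutative
monoid `G`. -/
def BlockT {G : Type*} [CommMonoid G] {m : ℕ} (g : Fin m → G) :
    AddSubmonoid (Fin m → ℕ) where
  carrier := {α | ∏ i, g i ^ α i = 1}
  zero_mem' := by simp
  add_mem' := by
    intro a b ha hb
    simp only [Set.mem_setOf_eq] at *
    show ∏ i, g i ^ (a i + b i) = 1
    simp [pow_add, Finset.prod_mul_distrib, ha, hb]

/-- The block monoid `ℬ(G₀)` of a subset `G₀` of a commutative monoid `G`. -/
noncomputable def BlockS {G : Type*} [CommMonoid G] (G₀ : Set G) : AddSubmonoid (G₀ →₀ ℕ) where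
  carrier := {α | (α.prod fun x n => (x : G) ^ n) = 1}
  zero_mem' := by simp
  add_mem' := by
    intro a b ha hb
    simp only [Set.mem_setOf_eq] at *
    rw [Finsupp.prod_add_index' (fun x => pow_zero _) (fun x m n => pow_add _ m n), ha, hb,
      one_mul]

/-- The monoid `S̃` for `S = ℬ(g)` graded by the last coordinate. -/
def TildeB {G : Type*} [CommMonoid G] {m : ℕ} (g : Fin (m + 1) → G) :
    AddSubmonoid ((Fin (m + 1) → ℕ) × ℕ) where
  carrier := {p | p.1 ∈ BlockT g ∧ p.2 ≤ p.1 (Fin.last m)}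
  zero_mem' := ⟨(BlockT g).zero_mem, le_rfl⟩
  add_mem' := by
    intro a b ha hb
    exact ⟨(BlockT g).add_mem ha.1 hb.1, add_le_add ha.2 hb.2⟩

/-- The Davenport constant `D(G₀)`: the maximal length of an atom of `ℬ(G₀)`. -/
noncomputable def DavenportC {G : Type*} [CommMonoid G] (G₀ : Set G) : ℕ :=
  sSup {k | ∃ γ : ↥(BlockS G₀), IsAtm γ ∧ degE (γ : G₀ →₀ ℕ) = k}

/-- The little Davenport constant `d(G₀)`: the maximal length of a sequence over `G₀`
containing no product-one subsequence. -/
noncomputable def littleDav {G : Type*} [CommMonoid G] (G₀ : Set G) : ℕ :=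
  sSup {k | ∃ α : G₀ →₀ ℕ, degE α = k ∧
    ∀ γ : ↥(BlockS G₀), IsAtm γ → ∃ x : G₀, α x < (γ : G₀ →₀ ℕ) x}

/-! ## Gröbner systems -/

/-- An admissible total order (given as a strict order relation) on a free commutative
monoid, written additively. -/
def IsAdmissible {F : Type*} [AddCommMonoid F] (lt : F → F → Prop) : Prop :=
  (∀ x y, lt x y ∨ x = y ∨ lt y x) ∧ (∀ x y z, lt x y → lt y z → lt x z) ∧
  (∀ x, ¬ lt x x) ∧ (∀ x y z, lt x y → lt (x + z) (y + z)) ∧ (∀ x, x ≠ 0 → lt 0 x)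

/-- `Λ` is a Gröbner system of the congruence `c` with respect to the order `lt`. -/
def IsGroebnerSystem {F : Type*} [AddCommMonoid F] (lt : F → F → Prop) (c : AddCon F)
    (Λ : Set (F × F)) : Prop :=
  Λ.Finite ∧ (∀ p ∈ Λ, c p.1 p.2 ∧ lt p.2 p.1) ∧
  (∀ z : F, (∀ p ∈ Λ, ¬ ∃ u, z = p.1 + u) → ∀ y, c z y → z = y ∨ lt z y)

/-- The ordering on positions `a[i]` induced by an enumeration of the atoms. -/
def posLt {S : Type*} [AddCommMonoid S] {w : S → ℕ} {n : ℕ} (e : Fin n ≃ ↥(Atoms S))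
    (q p : ATil S w) : Prop :=
  e.symm q.val.1 < e.symm p.val.1 ∨ (e.symm q.val.1 = e.symm p.val.1 ∧ q.val.2 < p.val.2)

/-- The admissible order on the free commutative monoid on `𝒜(S̃)` extending the order
`lt` on the free commutative monoid on `𝒜(S)`. -/
def ltTil {S : Type*} [AddCommMonoid S] (w : S → ℕ) (lt : FreeExp S → FreeExp S → Prop)
    {n : ℕ} (e : Fin n ≃ ↥(Atoms S)) (mu lam : ATil S w →₀ ℕ) : Prop :=
  lt (kap S w mu) (kap S w lam) ∨
  (kap S w mu = kap S w lam ∧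
    ∃ p : ATil S w, lam p < mu p ∧ ∀ q : ATil S w, posLt e q p → mu q = lam q)

/-- The set `Γ₂` of pairs `(x_{a[i]} x_{b[j]}, x_{a[i-1]} x_{b[j+1]})` with `x_a ≺ x_b`,
`0 < i ≤ |a|`, `0 ≤ j < |b|`. -/
def Gam2 (S : Type*) [AddCommMonoid S] (w : S → ℕ) (lt : FreeExp S → FreeExp S → Prop) :
    Set ((ATil S w →₀ ℕ) × (ATil S w →₀ ℕ)) :=
  {pr | ∃ (a b : ↥(Atoms S)) (i j : ℕ) (_ : 0 < i) (hi : i ≤ w (a : S)) (hj : j + 1 ≤ w (b : S)),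
    lt (Finsupp.single a 1) (Finsupp.single b 1) ∧
    pr = (Finsupp.single (atil w a i hi) 1 +
            Finsupp.single (atil w b j (Nat.le_of_succ_le hj)) 1,
          Finsupp.single (atil w a (i - 1) (le_trans (Nat.sub_le i 1) hi)) 1 +
            Finsupp.single (atil w b (j + 1) hj) 1)}

/-- The set `Γ₃` of pairs `(x_{a[i]} x_{a[j]}, x_{a[i-1]} x_{a[j+1]})` with `0 < i ≤ j < |a|`. -/
def Gam3 (S : Type*) [AddCommMonoid S] (w : S → ℕ) :
    Set ((ATil S w →₀ ℕ) × (ATil S w →₀ ℕ)) :=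
  {pr | ∃ (a : ↥(Atoms S)) (i j : ℕ) (_ : 0 < i) (hij : i ≤ j) (hj : j + 1 ≤ w (a : S)),
    pr = (Finsupp.single (atil w a i (le_trans hij (Nat.le_of_succ_le hj))) 1 +
            Finsupp.single (atil w a j (Nat.le_of_succ_le hj)) 1,
          Finsupp.single (atil w a (i - 1)
              (le_trans (Nat.sub_le i 1) (le_trans hij (Nat.le_of_succ_le hj)))) 1 +
            Finsupp.single (atil w a (j + 1) hj) 1)}

/-! ## The presentation homomorphism for semigroup rings -/

/-- The homomorphism `π_R : R[x_a : a ∈ 𝒜(S)] → R[S]`, `x_a ↦ a`. -/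
noncomputable def piR (R : Type*) (S : Type*) [CommRing R] [AddCommMonoid S] :
    MvPolynomial ↥(Atoms S) R →ₐ[R] AddMonoidAlgebra R S :=
  MvPolynomial.aeval fun a => AddMonoidAlgebra.single (a : S) 1

/-! ### Lengths, distances and `d`-steps -/

lemma degE_mono {σ : Type*} {α β : σ →₀ ℕ} (h : α ≤ β) : degE α ≤ degE β := by
  have h1 : degE α + degE (β - α) = degE (α + (β - α)) :=
    (Finsupp.sum_add_index' (fun _ => rfl) (fun _ _ _ => rfl)).symm
  rw [add_tsub_cancel_of_le h] at h1
  omega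

lemma gcdE_apply {σ : Type*} (α β : σ →₀ ℕ) (a : σ) : gcdE α β a = min (α a) (β a) := by
  simp [gcdE]

lemma gcdE_le_left {σ : Type*} (α β : σ →₀ ℕ) : gcdE α β ≤ α := fun a => by
  simp [gcdE_apply]

lemma gcdE_le_right {σ : Type*} (α β : σ →₀ ℕ) : gcdE α β ≤ β := fun a => by
  simp [gcdE_apply]

lemma gcdE_comm {σ : Type*} (α β : σ →₀ ℕ) : gcdE α β = gcdE β α := by
  ext a; simp [gcdE_apply, min_comm]

lemma dDist_comm {σ : Type*} (α β : σ →₀ ℕ) : dDist α β = dDist β α := by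
  rw [dDist, dDist, gcdE_comm, max_comm]

lemma dDist_add_right {σ : Type*} (α β δ : σ →₀ ℕ) : dDist (α + δ) (β + δ) = dDist α β := by
  have h : gcdE (α + δ) (β + δ) = gcdE α β + δ := by
    ext a; simp only [gcdE_apply, Finsupp.add_apply]; omega
  simp only [dDist, h, add_tsub_add_eq_tsub_right]

/-- A single link of a `d`-chain: two factorizations of the same element at distance at
most `d`. -/
def DStep {S : Type*} [AddCommMonoid S] (d : ℕ) (α γ : FreeExp S) : Prop :=
  fac α = fac γ ∧ dDist α γ ≤ d

lemma DStep.symm {S : Type*} [AddCommMonoid S] {d : ℕ} {α γ : FreeExp S} (h : DStep d α γ) :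
    DStep d γ α :=
  ⟨h.1.symm, dDist_comm α γ ▸ h.2⟩

instance {S : Type*} [AddCommMonoid S] (d : ℕ) : Std.Symm (DStep (S := S) d) :=
  ⟨fun _ _ h => h.symm⟩

lemma DStep.add_right {S : Type*} [AddCommMonoid S] {d : ℕ} {α γ : FreeExp S}
    (h : DStep d α γ) (δ : FreeExp S) : DStep d (α + δ) (γ + δ) :=
  ⟨by rw [fac_add, fac_add, h.1], by rw [dDist_add_right]; exact h.2⟩

/-- Connectedness by `d`-steps, as a congruence on the free commutative monoid. -/
def stepCon (S : Type*) [AddCommMonoid S] (d : ℕ) : AddCon (FreeExp S) where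
  r := Relation.ReflTransGen (DStep d)
  iseqv := ⟨fun _ => .refl, fun h => Std.Symm.symm _ _ h, fun h h' => h.trans h'⟩
  add' := fun {a b c e} h h' => by
    have h1 : Relation.ReflTransGen (DStep d) (a + c) (b + c) :=
      h.lift (· + c) fun _ _ h => h.add_right c
    have h2 : Relation.ReflTransGen (DStep d) (b + c) (b + e) :=
      h'.lift (b + ·) fun x y h => by
        simpa only [add_comm b] using h.add_right b
    exact h1.trans h2

lemma chainConn_of_reflTransGen {S : Type*} [AddCommMonoid S] {d : ℕ} {α γ : FreeExp S}
    (h : Relation.ReflTransGen (DStep d) α γ) : ChainConn d α γ := by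
  induction h with
  | refl => exact ⟨0, fun _ => α, rfl, rfl, by simp⟩
  | @tail β γ _ hs ih =>
    obtain ⟨k, c, h0, hk, hc⟩ := ih
    refine ⟨k + 1, fun j => if j ≤ k then c j else γ, by simpa using h0, by simp, ?_⟩
    intro j hj
    rcases Nat.lt_succ_iff_lt_or_eq.mp hj with hj | rfl
    · simpa [hj.le, Nat.succ_le_of_lt hj] using hc j hj
    · simpa [hk, DStep] using hs

/-- Pairs of length at most `d` are `d`-steps, so if they generate `∼_S`, then `d`-chains connect
any two factorizations of the same element. -/
lemma chainConn_of_rel {S : Type*} [AddCommMonoid S] {d : ℕ} {Λ : Set (FreeExp S × FreeExp S)}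
    (hgen : addConGen (fun x y => (x, y) ∈ Λ) = defCon S)
    (hdeg : ∀ p ∈ Λ, degE p.1 ≤ d ∧ degE p.2 ≤ d) {α γ : FreeExp S} (h : fac α = fac γ) :
    ChainConn d α γ := by
  have hle : addConGen (fun x y => (x, y) ∈ Λ) ≤ stepCon S d := by
    refine AddCon.addConGen_le.mpr fun x y hxy => Relation.ReflTransGen.single ⟨?_, ?_⟩
    · have h1 : addConGen (fun x y => (x, y) ∈ Λ) x y := AddConGen.Rel.of x y hxy
      rw [hgen] at h1
      exact h1
    · exact max_le ((degE_mono tsub_le_self).trans (hdeg _ hxy).1)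
        ((degE_mono tsub_le_self).trans (hdeg _ hxy).2)
  rw [hgen] at hle
  exact chainConn_of_reflTransGen (hle h)

/-- By cancellativity, the common part of two factorizations can be removed. -/
lemma fac_sub_gcdE {S : Type*} [AddCommMonoid S] [IsReducedAffine S] {α γ : FreeExp S}
    (h : fac α = fac γ) : fac (α - gcdE α γ) = fac (γ - gcdE α γ) := by
  apply IsReducedAffine.cancel (fac (gcdE α γ))
  rw [← fac_add, ← fac_add, add_tsub_cancel_of_le (gcdE_le_left α γ),
    add_tsub_cancel_of_le (gcdE_le_right α γ), h]

/-- Proposition 2.3: For every reduced affine monoid `S`, the catenary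
degree `c(S)` equals `c'(S)`, the minimal `d` such that the defining congruence `∼_S` is
generated by a set of pairs all of whose components have length at most `d`. -/
theorem catDeg_eq_presentation_degree (S : Type) [AddCommMonoid S] [IsReducedAffine S] :
    catDeg S = sInf {d | ∃ Λ : Set (FreeExp S × FreeExp S),
      addConGen (fun x y => (x, y) ∈ Λ) = defCon S ∧
      ∀ p ∈ Λ, degE p.1 ≤ d ∧ degE p.2 ≤ d} := by
  unfold catDeg
  congr 1
  ext d
  constructor
  · intro hd
    refine ⟨{p | fac p.1 = fac p.2 ∧ degE p.1 ≤ d ∧ degE p.2 ≤ d}, le_antisymm ?_ ?_,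
      fun p hp => hp.2⟩
    · exact AddCon.addConGen_le.mpr fun x y hxy => hxy.1
    · intro α γ h
      obtain ⟨k, c, rfl, rfl, hc⟩ := hd α γ h
      clear h
      induction k with
      | zero => exact AddCon.refl _ _
      | succ k ih =>
        refine AddCon.trans _ (ih fun j hj => hc j (by omega)) ?_
        obtain ⟨hf, hdist⟩ := hc k (by omega)
        set g := gcdE (c k) (c (k + 1)) with hg
        have hstep := AddConGen.Rel.of
          (r := fun x y => (x, y) ∈ {p : FreeExp S × FreeExp S |
            fac p.1 = fac p.2 ∧ degE p.1 ≤ d ∧ degE p.2 ≤ d})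
          (c k - g) (c (k + 1) - g)
          ⟨fac_sub_gcdE hf, (le_max_left _ _).trans hdist, (le_max_right _ _).trans hdist⟩
        have := AddCon.add (addConGen _) hstep (AddCon.refl _ g)
        rwa [tsub_add_cancel_of_le (gcdE_le_left _ _),
          tsub_add_cancel_of_le (gcdE_le_right _ _)] at this
  · rintro ⟨Λ, hgen, hdeg⟩ α γ h
    exact chainConn_of_rel hgen hdeg h
end

section
/- Let S be a connected graded reduced affine monoid and R a nontrivial commutative ring. Endow R[x_a : a ∈ 𝒜(S)] with the grading in which x_a has degree |a|, so that π_R : R[x_a : a ∈ 𝒜(S)] → R[S] is a homomorphism of graded algebras. Then c_gr(S) = μ(ker(π_R)), where μ(I) denotes the minimal non-negative integer d such that the ideal I is generated by elements of degree at most d. -/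
lemma gcdE_add {σ : Type*} (α β δ : σ →₀ ℕ) : gcdE (α + δ) (β + δ) = gcdE α β + δ := by
  ext a; simp [gcdE_apply, min_add_add_right]

lemma sub_gcdE_add {σ : Type*} (α β : σ →₀ ℕ) : (α - gcdE α β) + gcdE α β = α := by
  ext a; simp [gcdE_apply]

lemma dDistGr_comm {S : Type*} [AddCommMonoid S] (w : S → ℕ) (α β : FreeExp S) :
    dDistGr w α β = dDistGr w β α := by
  rw [dDistGr, dDistGr, gcdE_comm, max_comm]

lemma dDistGr_add {S : Type*} [AddCommMonoid S] (w : S → ℕ) (α β δ : FreeExp S) :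
    dDistGr w (α + δ) (β + δ) = dDistGr w α β := by
  simp [dDistGr, gcdE_add, add_tsub_add_eq_tsub_right]

lemma gdegE_add {S : Type*} [AddCommMonoid S] (w : S → ℕ) (α β : FreeExp S) :
    gdegE w (α + β) = gdegE w α + gdegE w β :=
  Finsupp.sum_add_index' (fun _ => zero_mul _) (fun _ m n => add_mul m n _)

lemma dDistGr_le {S : Type*} [AddCommMonoid S] (w : S → ℕ) {d : ℕ} {α β : FreeExp S}
    (hα : gdegE w α ≤ d) (hβ : gdegE w β ≤ d) : dDistGr w α β ≤ d := by
  have h1 := gdegE_add w (α - gcdE α β) (gcdE α β)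
  have h2 := gdegE_add w (β - gcdE β α) (gcdE β α)
  rw [sub_gcdE_add] at h1 h2
  rw [dDistGr, gcdE_comm α β]
  rw [gcdE_comm α β] at h1
  exact max_le (by omega) (by omega)

lemma weight_eq_gdegE {S : Type*} [AddCommMonoid S] (w : S → ℕ) (α : FreeExp S) :
    Finsupp.weight (fun a : ↥(Atoms S) => w (a : S)) α = gdegE w α := by
  simp [Finsupp.weight_apply, gdegE]

/-! ### Chains as a congruence -/

/-- A single step of a chain of weight at most `d`. -/
def ChainStep {S : Type*} [AddCommMonoid S] (w : S → ℕ) (d : ℕ) (α β : FreeExp S) : Prop :=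
  fac α = fac β ∧ dDistGr w α β ≤ d

lemma chainConnGr_iff {S : Type*} [AddCommMonoid S] (w : S → ℕ) (d : ℕ) (α γ : FreeExp S) :
    ChainConnGr w d α γ ↔ Relation.ReflTransGen (ChainStep w d) α γ := by
  constructor
  · rintro ⟨k, c, rfl, rfl, h⟩
    induction k with
    | zero => exact .refl
    | succ k ih => exact (ih fun j hj => h j (by omega)).tail (h k (by omega))
  · intro h
    induction h using Relation.ReflTransGen.head_induction_on with
    | refl => exact ⟨0, fun _ => γ, rfl, rfl, by simp⟩
    | @head α β hstep _ ih =>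
      obtain ⟨k, c, h0, hk, h⟩ := ih
      refine ⟨k + 1, fun j => j.casesOn α c, rfl, hk, ?_⟩
      rintro (_ | j) hj
      · subst h0; exact hstep
      · exact h j (by omega)

/-- The congruence on exponent vectors of being joined by a chain of weight at most `d`. -/
def chainCon (S : Type*) [AddCommMonoid S] (w : S → ℕ) (d : ℕ) : AddCon (FreeExp S) where
  r := Relation.ReflTransGen (ChainStep w d)
  iseqv := ⟨fun _ => .refl,
    fun h => h.swap.lift id fun _ _ h => ⟨h.1.symm, dDistGr_comm w _ _ ▸ h.2⟩,
    fun h h' => h.trans h'⟩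
  add' := by
    have key : ∀ {α β : FreeExp S} (δ : FreeExp S), Relation.ReflTransGen (ChainStep w d) α β →
        Relation.ReflTransGen (ChainStep w d) (α + δ) (β + δ) := fun δ h =>
      h.lift (· + δ) fun _ _ h => ⟨by rw [fac_add, fac_add, h.1], by rw [dDistGr_add]; exact h.2⟩
    intro a b a' b' h h'
    refine (key a' h).trans ?_
    rw [add_comm b a', add_comm b b']
    exact key b h'

lemma chainCon_iff {S : Type*} [AddCommMonoid S] (w : S → ℕ) (d : ℕ) (α γ : FreeExp S) :
    chainCon S w d α γ ↔ Relation.ReflTransGen (ChainStep w d) α γ := Iff.rfl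

/-! ### The kernel is spanned by binomials -/

/-- The algebra map `x_i ↦ g(e_i)` into a monoid algebra sends `r x^α` to `r g(α)`. -/
lemma aeval_single_monomial {σ M R : Type*} [CommRing R] [AddCommMonoid M]
    (g : (σ →₀ ℕ) →+ M) (α : σ →₀ ℕ) (r : R) :
    MvPolynomial.aeval (fun i => AddMonoidAlgebra.single (g (Finsupp.single i 1)) (1 : R))
      (MvPolynomial.monomial α r) = AddMonoidAlgebra.single (g α) r := by
  induction α using Finsupp.induction_linear generalizing r with
  | zero => simp [AddMonoidAlgebra.coe_algebraMap]
  | add α β hα hβ =>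
    rw [← mul_one r, ← MvPolynomial.monomial_mul, map_mul, hα, hβ, map_add,
      AddMonoidAlgebra.single_mul_single]
  | single i n =>
    have hg : g (Finsupp.single i n) = n • g (Finsupp.single i 1) := by
      rw [← map_nsmul, Finsupp.smul_single, smul_eq_mul, mul_one]
    simp [MvPolynomial.aeval_monomial, AddMonoidAlgebra.coe_algebraMap,
      AddMonoidAlgebra.single_pow, AddMonoidAlgebra.single_mul_single, hg]

/-- The factorization map as a homomorphism of additive monoids. -/
def facHom (S : Type*) [AddCommMonoid S] : FreeExp S →+ S where
  toFun := fac
  map_zero' := Finsupp.sum_zero_index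
  map_add' := fac_add

lemma piR_monomial (R S : Type*) [CommRing R] [AddCommMonoid S] (α : FreeExp S) (r : R) :
    piR R S (MvPolynomial.monomial α r) = AddMonoidAlgebra.single (fac α) r := by
  have h := aeval_single_monomial (facHom S) α r
  have h1 : ∀ a : ↥(Atoms S), facHom S (Finsupp.single a 1) = (a : S) := fun a => by
    show fac _ = _
    simp [fac]
  simp only [h1] at h
  exact h

lemma binomial_mem_ker (R S : Type*) [CommRing R] [AddCommMonoid S] {α γ : FreeExp S}
    (h : fac α = fac γ) :
    MvPolynomial.monomial α (1 : R) - MvPolynomial.monomial γ 1 ∈ RingHom.ker (piR R S) := by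
  rw [RingHom.mem_ker, map_sub, piR_monomial, piR_monomial, h, sub_self]

/-- An element `f` of `ker π_R` is an `R`-linear combination of binomials in the kernel, both of
whose exponents belong to the support of `f`. Choosing in the support of `f` one factorization
`r(s)` of each `s` that has one there, the linear map `s ↦ x^{r(s)}` turns `π_R(f) = 0` into
`∑ f_α x^{r(a^α)} = 0`, which is subtracted from `f = ∑ f_α x^α`. -/
lemma mem_span_binomials_of_mem_ker {R S : Type*} [CommRing R] [AddCommMonoid S]
    {f : MvPolynomial ↥(Atoms S) R} (hf : f ∈ RingHom.ker (piR R S)) :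
    f ∈ Submodule.span R {g : MvPolynomial ↥(Atoms S) R | ∃ α ∈ f.support, ∃ γ ∈ f.support,
      fac α = fac γ ∧ g = MvPolynomial.monomial α (1 : R) - MvPolynomial.monomial γ 1} := by
  classical
  have hr : ∀ s : S, ∃ γ : FreeExp S, ∀ α ∈ f.support, fac α = s → γ ∈ f.support ∧ fac γ = s := by
    intro s
    by_cases h : ∃ α ∈ f.support, fac α = s
    · obtain ⟨α, hα, hs⟩ := h
      exact ⟨α, fun _ _ _ => ⟨hα, hs⟩⟩
    · exact ⟨0, fun α hα hs => (h ⟨α, hα, hs⟩).elim⟩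
  choose r hr using hr
  let L : AddMonoidAlgebra R S →ₗ[R] MvPolynomial ↥(Atoms S) R :=
    (Finsupp.linearCombination R fun s => MvPolynomial.monomial (r s) (1 : R)) ∘ₗ
      (AddMonoidAlgebra.coeffLinearEquiv R).toLinearMap
  have hL : ∀ s c, L (AddMonoidAlgebra.single s c) = c • MvPolynomial.monomial (r s) (1 : R) := by
    intro s c
    exact Finsupp.linearCombination_single R c s
  have hsum : f = ∑ α ∈ f.support, f.coeff α • MvPolynomial.monomial α (1 : R) := by
    conv_lhs => rw [f.as_sum]
    simp [MvPolynomial.smul_monomial]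
  have h0 : ∑ α ∈ f.support, f.coeff α • MvPolynomial.monomial (r (fac α)) (1 : R) = 0 := by
    have h := congrArg L ((RingHom.mem_ker).1 hf)
    rw [f.as_sum, map_sum, map_sum, map_zero] at h
    simpa only [piR_monomial, hL] using h
  have hdiff : f = ∑ α ∈ f.support, f.coeff α •
      (MvPolynomial.monomial α (1 : R) - MvPolynomial.monomial (r (fac α)) 1) := by
    simp only [smul_sub, Finset.sum_sub_distrib, h0, sub_zero]
    exact hsum
  have hmem : ∑ α ∈ f.support, f.coeff α •
      (MvPolynomial.monomial α (1 : R) - MvPolynomial.monomial (r (fac α)) 1) ∈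
      Submodule.span R {g : MvPolynomial ↥(Atoms S) R | ∃ α ∈ f.support, ∃ γ ∈ f.support,
        fac α = fac γ ∧ g = MvPolynomial.monomial α (1 : R) - MvPolynomial.monomial γ 1} :=
    Submodule.sum_mem _ fun α hα => Submodule.smul_mem _ _ <| Submodule.subset_span
      ⟨α, hα, r (fac α), (hr _ α hα rfl).1, (hr _ α hα rfl).2.symm, rfl⟩
  rwa [← hdiff] at hmem

/-! ### The two implications -/

/-- Chains of weight at most `d` make the binomials of degree at most `d` generate `ker π_R`. -/
lemma exists_generators_of_chains {S R : Type*} [AddCommMonoid S] [IsReducedAffine S] [CommRing R]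
    (w : S → ℕ) (d : ℕ) (h : ∀ α γ : FreeExp S, fac α = fac γ → ChainConnGr w d α γ) :
    ∃ B : Set (MvPolynomial ↥(Atoms S) R),
      (∀ f ∈ B, MvPolynomial.weightedTotalDegree (fun a : ↥(Atoms S) => w (a : S)) f ≤ d) ∧
      Ideal.span B = RingHom.ker (piR R S) := by
  classical
  set B : Set (MvPolynomial ↥(Atoms S) R) := {g | ∃ α γ : FreeExp S, fac α = fac γ ∧
    gdegE w α ≤ d ∧ gdegE w γ ≤ d ∧
    g = MvPolynomial.monomial α (1 : R) - MvPolynomial.monomial γ 1} with hB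
  refine ⟨B, ?_, le_antisymm (Ideal.span_le.2 ?_) ?_⟩
  · rintro _ ⟨α, γ, -, hα, hγ, rfl⟩
    refine Finset.sup_le fun m hm => ?_
    rw [weight_eq_gdegE]
    rcases Finset.mem_union.1 (MvPolynomial.support_sub _ _ _ hm) with hm | hm
    · rwa [Finset.mem_singleton.1 (MvPolynomial.support_monomial_subset hm)]
    · rwa [Finset.mem_singleton.1 (MvPolynomial.support_monomial_subset hm)]
  · rintro _ ⟨α, γ, hfac, -, -, rfl⟩
    exact binomial_mem_ker R S hfac
  · have step : ∀ α γ : FreeExp S, ChainStep w d α γ →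
        MvPolynomial.monomial α (1 : R) - MvPolynomial.monomial γ 1 ∈ Ideal.span B := by
      intro α γ hs
      have h1 := sub_gcdE_add α γ
      have h2 := sub_gcdE_add γ α
      rw [gcdE_comm γ α] at h2
      have hd := hs.2
      rw [dDistGr] at hd
      -- Cancellativity allows the common factor to be removed from both factorizations.
      have hfac : fac (α - gcdE α γ) = fac (γ - gcdE α γ) := by
        have h3 := hs.1
        rw [← h1, ← h2, fac_add, fac_add] at h3
        simp only [h2] at h3
        rw [add_comm, add_comm (fac (γ - _))] at h3
        exact IsReducedAffine.cancel _ _ _ h3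
      have hmem : MvPolynomial.monomial (α - gcdE α γ) (1 : R) -
          MvPolynomial.monomial (γ - gcdE α γ) 1 ∈ Ideal.span B :=
        Ideal.subset_span ⟨_, _, hfac, (le_max_left _ _).trans hd, (le_max_right _ _).trans hd, rfl⟩
      have := Ideal.mul_mem_right (MvPolynomial.monomial (gcdE α γ) (1 : R)) _ hmem
      rwa [sub_mul, MvPolynomial.monomial_mul, MvPolynomial.monomial_mul, h1, h2, one_mul] at this
    intro f hf
    have hle : Submodule.span R {g : MvPolynomial ↥(Atoms S) R | ∃ α ∈ f.support,
        ∃ γ ∈ f.support, fac α = fac γ ∧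
          g = MvPolynomial.monomial α (1 : R) - MvPolynomial.monomial γ 1} ≤
        (Ideal.span B).restrictScalars R := by
      rw [Submodule.span_le]
      rintro _ ⟨α, -, γ, -, hfac, rfl⟩
      have hc := (chainConnGr_iff w d α γ).1 (h α γ hfac)
      show _ ∈ Ideal.span B
      clear hfac
      induction hc with
      | refl => simp
      | tail _ hs ih =>
        have := add_mem ih (step _ _ hs)
        rwa [sub_add_sub_cancel] at this
    exact hle (mem_span_binomials_of_mem_ker hf)

/-- If `ker π_R` is generated in degrees at most `d`, then it is killed by the map to the monoid
algebra of the quotient by `chainCon`, so chains of weight at most `d` exist. -/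
lemma chains_of_generators {S R : Type*} [AddCommMonoid S] [CommRing R] [Nontrivial R]
    (w : S → ℕ) (d : ℕ) (B : Set (MvPolynomial ↥(Atoms S) R))
    (hdeg : ∀ f ∈ B, MvPolynomial.weightedTotalDegree (fun a : ↥(Atoms S) => w (a : S)) f ≤ d)
    (hspan : Ideal.span B = RingHom.ker (piR R S)) (α γ : FreeExp S) (hfac : fac α = fac γ) :
    ChainConnGr w d α γ := by
  let φ : MvPolynomial ↥(Atoms S) R →ₐ[R] AddMonoidAlgebra R (chainCon S w d).Quotient :=
    MvPolynomial.aeval fun a =>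
      AddMonoidAlgebra.single ((chainCon S w d).mk' (Finsupp.single a 1)) (1 : R)
  have hφ : ∀ (β : FreeExp S) (r : R), φ (MvPolynomial.monomial β r) =
      AddMonoidAlgebra.single ((chainCon S w d).mk' β) r := fun β r =>
    aeval_single_monomial (chainCon S w d).mk' β r
  have hker : RingHom.ker (piR R S) ≤ RingHom.ker φ := by
    rw [← hspan, Ideal.span_le]
    intro f hf
    have hfker : f ∈ RingHom.ker (piR R S) := hspan ▸ Ideal.subset_span hf
    have hsupp : ∀ β ∈ f.support, gdegE w β ≤ d := fun β hβ => by
      rw [← weight_eq_gdegE]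
      exact (MvPolynomial.le_weightedTotalDegree _ hβ).trans (hdeg f hf)
    have hle : Submodule.span R {g : MvPolynomial ↥(Atoms S) R | ∃ α ∈ f.support,
        ∃ γ ∈ f.support, fac α = fac γ ∧
          g = MvPolynomial.monomial α (1 : R) - MvPolynomial.monomial γ 1} ≤
        LinearMap.ker φ.toLinearMap := by
      rw [Submodule.span_le]
      rintro _ ⟨β, hβ, δ, hδ, hβδ, rfl⟩
      have hQ : (chainCon S w d).mk' β = (chainCon S w d).mk' δ :=
        (AddCon.eq _).2 ((chainCon_iff w d β δ).2
          (.single ⟨hβδ, dDistGr_le w (hsupp β hβ) (hsupp δ hδ)⟩))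
      show φ _ = 0
      rw [map_sub, hφ, hφ, hQ, sub_self]
    exact hle (mem_span_binomials_of_mem_ker hfker)
  have h := (RingHom.mem_ker).1 (hker (binomial_mem_ker R S hfac))
  rw [map_sub, hφ, hφ, sub_eq_zero] at h
  rw [chainConnGr_iff, ← chainCon_iff]
  refine (AddCon.eq (chainCon S w d)).1 (?_ : (chainCon S w d).mk' α = (chainCon S w d).mk' γ)
  exact Finsupp.single_left_injective (one_ne_zero : (1 : R) ≠ 0)
    (congrArg AddMonoidAlgebra.coeff h)

/-- Corollary 3.4: for a connected graded reduced affine monoid `S`,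
`c_gr(S) = μ(ker π_R)`, where the polynomial ring is graded with `deg x_a = |a|`. -/
theorem gradedCatDeg_eq_mu_ker (S : Type) [AddCommMonoid S] [IsReducedAffine S]
    (w : S → ℕ) (hw : ∀ s t : S, w (s + t) = w s + w t)
    (hconn : ∀ s : S, w s = 0 → s = 0)
    (R : Type) [CommRing R] [Nontrivial R] :
    catDegGr S w = sInf {d | ∃ B : Set (MvPolynomial ↥(Atoms S) R),
      (∀ f ∈ B, MvPolynomial.weightedTotalDegree (fun a : ↥(Atoms S) => w (a : S)) f ≤ d) ∧
      Ideal.span B = RingHom.ker (piR R S)} := by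
  unfold catDegGr
  congr 1
  ext d
  constructor
  · exact exists_generators_of_chains w d
  · rintro ⟨B, hdeg, hspan⟩
    exact chains_of_generators w d B hdeg hspan
end

section
/- Let S be a graded reduced affine monoid and S̃ the associated monoid with atoms {a[i] : a ∈ 𝒜(S), 0 ≤ i ≤ |a|}. If α, β ∈ ℕ₀^{𝒜(S̃)} satisfy κ(α) = κ(β) and δ(α) = δ(β), then x^α ∼ x^β, where ∼ is the congruence on the free commutative monoid M̃ on {x_{a[i]} : a[i] ∈ 𝒜(S̃)} generated by the pairs (x_{a[k]} x_{b[l]}, x_{a[k+1]} x_{b[l−1]}) for a, b ∈ 𝒜(S), 0 ≤ k ≤ |a| − 1, 1 ≤ l ≤ |b|. -/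
/-! ### Connecting exponent vectors by quadratic relations -/

lemma exists_eq_single_add {σ : Type*} {l : σ →₀ ℕ} {p : σ} (h : l p ≠ 0) :
    ∃ m : σ →₀ ℕ, l = Finsupp.single p 1 + m :=
  ⟨l - Finsupp.single p 1, (add_tsub_cancel_of_le
    (Finsupp.single_le_iff.2 (Nat.one_le_iff_ne_zero.2 h))).symm⟩

lemma exists_eq_atil {S : Type*} [AddCommMonoid S] {w : S → ℕ} (p : ATil S w) :
    ∃ (a : ↥(Atoms S)) (i : ℕ) (h : i ≤ w (a : S)), p = atil w a i h :=
  ⟨p.val.1, p.val.2, p.property, rfl⟩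

lemma kap_single {S : Type*} [AddCommMonoid S] (w : S → ℕ) (p : ATil S w) :
    kap S w (Finsupp.single p 1) = Finsupp.single p.val.1 1 :=
  Finsupp.mapDomain_single

lemma delt_single {S : Type*} [AddCommMonoid S] (w : S → ℕ) (p : ATil S w) :
    delt w (Finsupp.single p 1) = p.val.2 := by
  simp [delt, Finsupp.sum_single_index]

/-- An exponent vector with `δ > 0` contains some `b[l]` with `l > 0`. -/
lemma exists_of_delt_pos {S : Type*} [AddCommMonoid S] {w : S → ℕ} {l : ATil S w →₀ ℕ}
    (h : 0 < delt w l) : ∃ p : ATil S w, l p ≠ 0 ∧ 1 ≤ p.val.2 := by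
  obtain ⟨p, hp, hne⟩ := Finset.exists_ne_zero_of_sum_ne_zero (Nat.pos_iff_ne_zero.1 h)
  exact ⟨p, Finsupp.mem_support_iff.1 hp,
    Nat.one_le_iff_ne_zero.2 fun h0 => hne (by simp [h0])⟩

/-- If `a` occurs in `κ(λ)`, then some `a[j]` occurs in `λ`. -/
lemma exists_of_kap_ne_zero {S : Type*} [AddCommMonoid S] {w : S → ℕ} {l : ATil S w →₀ ℕ}
    {a : ↥(Atoms S)} (h : kap S w l a ≠ 0) : ∃ p : ATil S w, l p ≠ 0 ∧ p.val.1 = a := by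
  classical
  have hmem := Finsupp.mapDomain_support (Finsupp.mem_support_iff.2 h)
  obtain ⟨p, hp, hpa⟩ := Finset.mem_image.1 hmem
  exact ⟨p, Finsupp.mem_support_iff.1 hp, hpa⟩

/-- Inner induction, on the gap `d = j - i` between a factor `a[i]` on the left and a factor
`a[j]` on the right; `IH` is the result for exponent vectors of degree `n`. -/
lemma con_of_gap {S : Type*} [AddCommMonoid S] {w : S → ℕ} {n : ℕ}
    (IH : ∀ α β : ATil S w →₀ ℕ, α.degree = n → kap S w α = kap S w β → delt w α = delt w β →
      addConGen (quadRel S w) α β) (a : ↥(Atoms S)) (d : ℕ) :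
    ∀ (i : ℕ) (hi : i ≤ w (a : S)) (hj : i + d ≤ w (a : S)) (α β : ATil S w →₀ ℕ),
      α.degree = n → kap S w α = kap S w β → i + delt w α = i + d + delt w β →
      addConGen (quadRel S w) (Finsupp.single (atil w a i hi) 1 + α)
        (Finsupp.single (atil w a (i + d) hj) 1 + β) := by
  induction d with
  | zero =>
    intro i hi hj α β hn hκ hδ
    exact (addConGen (quadRel S w)).add ((addConGen (quadRel S w)).refl _)
      (IH α β hn hκ (by omega))
  | succ d ihd =>
    intro i hi hj α β hn hκ hδ
    obtain ⟨p, hne, hpos⟩ := exists_of_delt_pos (w := w) (l := α) (by omega)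
    obtain ⟨b, l, hl, rfl⟩ := exists_eq_atil p
    replace hpos : 1 ≤ l := hpos
    obtain ⟨γ, rfl⟩ := exists_eq_single_add hne
    have hi' : i + 1 ≤ w (a : S) := by omega
    have hl' : l - 1 ≤ w (b : S) := le_trans (Nat.sub_le l 1) hl
    have hstep : addConGen (quadRel S w)
        (Finsupp.single (atil w a i hi) 1 + Finsupp.single (atil w b l hl) 1)
        (Finsupp.single (atil w a (i + 1) hi') 1 + Finsupp.single (atil w b (l - 1) hl') 1) :=
      AddConGen.Rel.of _ _ ⟨a, b, i, l, hi', hpos, hl, rfl, rfl⟩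
    have hstep' := (addConGen (quadRel S w)).add hstep ((addConGen (quadRel S w)).refl γ)
    rw [add_assoc, add_assoc] at hstep'
    have hrec := ihd (i + 1) hi' (by omega) (Finsupp.single (atil w b (l - 1) hl') 1 + γ) β
      (by simpa using hn)
      (by rw [← hκ, kap_add, kap_add, kap_single, kap_single]; rfl)
      (by
        rw [delt_add, delt_single] at hδ ⊢
        simp only [atil] at hδ ⊢
        omega)
    have hidx : atil w a (i + 1 + d) (by omega) = atil w a (i + (d + 1)) hj :=
      Subtype.ext (Prod.ext rfl (by simp only [atil]; omega))
    rw [hidx] at hrec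
    exact (addConGen (quadRel S w)).trans hstep' hrec

lemma con_of_degree {S : Type*} [AddCommMonoid S] (w : S → ℕ) (n : ℕ) :
    ∀ α β : ATil S w →₀ ℕ, α.degree = n → kap S w α = kap S w β → delt w α = delt w β →
      addConGen (quadRel S w) α β := by
  induction n with
  | zero =>
    intro α β hn hκ _
    obtain rfl := (Finsupp.degree_eq_zero_iff α).1 hn
    have hβ : β = 0 := by
      ext p
      by_contra hp
      obtain ⟨γ, rfl⟩ := exists_eq_single_add hp
      have := DFunLike.congr_fun hκ p.val.1
      rw [kap_add, kap_single] at this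
      simp [kap, Finsupp.mapDomain_zero] at this
      omega
    rw [hβ]
    exact (addConGen (quadRel S w)).refl _
  | succ n IH =>
    intro α β hn hκ hδ
    obtain ⟨p, hα⟩ : ∃ p, α p ≠ 0 := by
      by_contra! h
      have h0 : α = 0 := Finsupp.ext h
      simp [h0] at hn
    obtain ⟨a, i, hi, rfl⟩ := exists_eq_atil p
    obtain ⟨α', rfl⟩ := exists_eq_single_add hα
    obtain ⟨q, hβ, haa⟩ := exists_of_kap_ne_zero (w := w) (l := β) (a := a) (by
      rw [← hκ, kap_add, kap_single]; simp [atil])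
    obtain ⟨a', j, hj, rfl⟩ := exists_eq_atil q
    obtain rfl : a' = a := haa
    obtain ⟨β', rfl⟩ := exists_eq_single_add hβ
    rw [kap_add, kap_add, kap_single, kap_single] at hκ
    have hκ' : kap S w α' = kap S w β' := add_left_cancel hκ
    rw [delt_add, delt_add, delt_single, delt_single] at hδ
    replace hδ : i + delt w α' = j + delt w β' := hδ
    have hα' : α'.degree = n := by
      rw [map_add, Finsupp.degree_single] at hn
      omega
    -- The degree of an exponent vector is determined by its image under `κ`.
    have hdeg : ∀ l : ATil S w →₀ ℕ, (kap S w l).degree = l.degree := fun l =>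
      Finsupp.degree_mapDomain _ _
    have hβ' : β'.degree = n := by rw [← hdeg, ← hκ', hdeg, hα']
    rcases le_total i j with h | h
    · obtain ⟨d, rfl⟩ := Nat.exists_eq_add_of_le h
      exact con_of_gap IH a' d i hi hj α' β' hα' hκ' hδ
    · obtain ⟨d, rfl⟩ := Nat.exists_eq_add_of_le h
      exact (addConGen (quadRel S w)).symm
        (con_of_gap IH a' d j hj hi β' α' hβ' hκ'.symm hδ.symm)


/-- Lemma 4.2: if `κ(α) = κ(β)` and `δ(α) = δ(β)` then `x^α ∼ x^β` for
the congruence generated by the quadratic relations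
`(x_{a[k]} x_{b[l]}, x_{a[k+1]} x_{b[l-1]})`. -/
theorem quadratic_relations_connect (S : Type) [AddCommMonoid S] [IsReducedAffine S]
    (w : S → ℕ) (hw : ∀ s t : S, w (s + t) = w s + w t)
    (α β : ATil S w →₀ ℕ) (hκ : kap S w α = kap S w β) (hδ : delt w α = delt w β) :
    addConGen (quadRel S w) α β := by
  exact con_of_degree w α.degree α β rfl hκ hδ
end

section
/- Let G be an abelian group, g = (g₁,…,g_m) ∈ G^m, and g̃ = (g₁,…,g_m,g_m) ∈ G^{m+1}. Endow S = ℬ(g) with the grading ℬ(g)_d = {α ∈ ℬ(g) : α_m = d}. Then the map sending α[i] ∈ S̃ (for α ∈ ℬ(g), 0 ≤ i ≤ α_m) to (α₁,…,α_{m−1}, α_m − i, i) ∈ ℕ₀^{m+1} is a monoid isomorphism from S̃ onto ℬ(g̃). -/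
/-- Merging the two last coordinates of an exponent vector and recording the last one:
`β ↦ (β₁, …, β_{m-1}, β_m + β_{m+1})[β_{m+1}]`. -/
def mergeV {m : ℕ} (β : Fin (m + 2) → ℕ) : (Fin (m + 1) → ℕ) × ℕ :=
  (Fin.snoc (fun j : Fin m => β j.castSucc.castSucc)
    (β (Fin.last m).castSucc + β (Fin.last (m + 1))), β (Fin.last (m + 1)))

/-- Splitting the last coordinate: `α[i] ↦ (α₁, …, α_{m-1}, α_m - i, i)`. The subtraction
truncates, so this is meaningful only for `i ≤ α_m`. -/
def splitV {m : ℕ} (p : (Fin (m + 1) → ℕ) × ℕ) : Fin (m + 2) → ℕ :=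
  Fin.snoc (Function.update p.1 (Fin.last m) (p.1 (Fin.last m) - p.2)) p.2

lemma mergeV_add {m : ℕ} (β γ : Fin (m + 2) → ℕ) :
    mergeV (β + γ) = mergeV β + mergeV γ := by
  refine Prod.ext (funext fun j => ?_) rfl
  refine Fin.lastCases ?_ (fun j => ?_) j
  · simp [mergeV, add_add_add_comm]
  · simp [mergeV]

lemma splitV_mergeV {m : ℕ} (β : Fin (m + 2) → ℕ) : splitV (mergeV β) = β := by
  funext j
  refine Fin.lastCases ?_ (fun j => ?_) j
  · simp [splitV, mergeV]
  · refine Fin.lastCases ?_ (fun j => ?_) j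
    · simp [splitV, mergeV]
    · simp [splitV, mergeV, (Fin.castSucc_lt_last j).ne]

lemma mergeV_splitV {m : ℕ} (p : (Fin (m + 1) → ℕ) × ℕ) (hp : p.2 ≤ p.1 (Fin.last m)) :
    mergeV (splitV p) = p := by
  refine Prod.ext (funext fun j => ?_) (by simp [splitV, mergeV])
  refine Fin.lastCases ?_ (fun j => ?_) j
  · simp [splitV, mergeV, hp]
  · simp [splitV, mergeV]

/-- The product-one conditions defining `ℬ(g)` and `ℬ(g̃)` correspond under merging, while the
bound `i ≤ |α|` holds automatically for a merged vector. -/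
lemma mergeV_mem_iff {G : Type*} [CommMonoid G] {m : ℕ} (g : Fin (m + 1) → G)
    (β : Fin (m + 2) → ℕ) :
    mergeV β ∈ TildeB g ↔
      β ∈ BlockT (Fin.snoc g (g (Fin.last m)) : Fin (m + 2) → G) := by
  change (∏ i, g i ^ (mergeV β).1 i = 1 ∧ (mergeV β).2 ≤ (mergeV β).1 (Fin.last m)) ↔
    ∏ i, (Fin.snoc g (g (Fin.last m)) : Fin (m + 2) → G) i ^ β i = 1
  simp [mergeV, Fin.prod_univ_castSucc, pow_add, mul_assoc]

/-- Merging as an isomorphism from `ℬ(g̃)` onto `S̃`, with inverse given by splitting. -/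
def mergeB {G : Type*} [CommMonoid G] {m : ℕ} (g : Fin (m + 1) → G) :
    ↥(BlockT (Fin.snoc g (g (Fin.last m)) : Fin (m + 2) → G)) ≃+ ↥(TildeB g) where
  toFun β := ⟨mergeV β.1, (mergeV_mem_iff g β.1).2 β.2⟩
  invFun p := ⟨splitV p.1, (mergeV_mem_iff g _).1
    (by rw [mergeV_splitV p.1 p.2.2]; exact p.2)⟩
  left_inv β := Subtype.ext (splitV_mergeV β.1)
  right_inv p := Subtype.ext (mergeV_splitV p.1 p.2.2)
  map_add' β γ := Subtype.ext (mergeV_add β.1 γ.1)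

/-- Proposition 4.6: `ℬ(g̃) ≅ S̃` where `S = ℬ(g)` is graded by the last
coordinate and `g̃` repeats the last entry of `g`; the isomorphism sends `α[i]` to
`(α₁, …, α_{m-1}, α_m - i, i)`. -/
theorem tildeB_iso_block (G : Type) [CommGroup G] (m : ℕ) (g : Fin (m + 1) → G) :
    ∃ e : ↥(TildeB g) ≃+ ↥(BlockT (Fin.snoc g (g (Fin.last m)))),
      ∀ p : ↥(TildeB g), (e p : Fin (m + 2) → ℕ) =
        Fin.snoc (Function.update ((p : ((Fin (m + 1) → ℕ) × ℕ)).1) (Fin.last m)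
          (((p : ((Fin (m + 1) → ℕ) × ℕ)).1) (Fin.last m) -
            (p : ((Fin (m + 1) → ℕ) × ℕ)).2))
          (p : ((Fin (m + 1) → ℕ) × ℕ)).2 := by
  exact ⟨(mergeB g).symm, fun _ => rfl⟩
end

section
/- Let G be an abelian group and g = (g₁,…,g_m) ∈ G^m with g_{m−1} = g_m. Let H = G × ℤ and define h ∈ H^{m+1} by h_i = (g_i, 0) for 1 ≤ i ≤ m−1, h_m = (g_{m−1}, 1), and h_{m+1} = (1_G, −1). Then the block monoids ℬ(g) and ℬ(h) are isomorphic as monoids. -/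
/-! ### Duplicating a repeated entry -/

/-- Here the entry `h_m` has first component `g_m`, the last entry of `g`; when `g_{m-1} = g_m`
this is the sequence of the theorem. -/
lemma mem_block_extension_iff {G : Type*} [CommGroup G] {m : ℕ} (g : Fin (m + 2) → G)
    (h : Fin (m + 3) → G × Multiplicative ℤ)
    (h0 : ∀ i : Fin (m + 1), h i.castSucc.castSucc = (g i.castSucc, 1))
    (h1 : h (Fin.last (m + 1)).castSucc =
      (g (Fin.last (m + 1)), Multiplicative.ofAdd (1 : ℤ)))
    (h2 : h (Fin.last (m + 2)) = (1, Multiplicative.ofAdd (-1 : ℤ)))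
    (β : Fin (m + 3) → ℕ) :
    β ∈ BlockT h ↔
      Fin.init β ∈ BlockT g ∧ β (Fin.last (m + 2)) = β (Fin.last (m + 1)).castSucc := by
  change (∏ i, h i ^ β i = 1) ↔ (∏ i, g i ^ (Fin.init β) i = 1) ∧ _
  rw [Fin.prod_univ_castSucc, Fin.prod_univ_castSucc,
    Fin.prod_univ_castSucc (fun i => g i ^ Fin.init β i), h1, h2]
  simp only [h0, Prod.ext_iff, Prod.fst_mul, Prod.snd_mul, Prod.fst_prod, Prod.snd_prod,
    Prod.pow_fst, Prod.pow_snd, one_pow, mul_one, Finset.prod_const_one, one_mul,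
    Prod.fst_one, Prod.snd_one, Fin.init]
  refine and_congr_right fun _ => ?_
  rw [← ofAdd_nsmul, ← ofAdd_nsmul, ← ofAdd_add, ofAdd_eq_one]
  simp only [nsmul_eq_mul]
  omega

/-- The isomorphism duplicates the last coordinate; its inverse forgets the duplicate. -/
lemma block_equiv_of_extension {G : Type*} [CommGroup G] {m : ℕ} (g : Fin (m + 2) → G)
    (h : Fin (m + 3) → G × Multiplicative ℤ)
    (h0 : ∀ i : Fin (m + 1), h i.castSucc.castSucc = (g i.castSucc, 1))
    (h1 : h (Fin.last (m + 1)).castSucc =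
      (g (Fin.last (m + 1)), Multiplicative.ofAdd (1 : ℤ)))
    (h2 : h (Fin.last (m + 2)) = (1, Multiplicative.ofAdd (-1 : ℤ))) :
    Nonempty (↥(BlockT g) ≃+ ↥(BlockT h)) := by
  have key := mem_block_extension_iff g h h0 h1 h2
  exact ⟨{
    toFun := fun α => ⟨Fin.snoc (α := fun _ => ℕ) α.1 (α.1 (Fin.last (m + 1))), by
      rw [key, Fin.init_snoc, Fin.snoc_last, Fin.snoc_castSucc]
      exact ⟨α.2, rfl⟩⟩
    invFun := fun β => ⟨Fin.init β.1, ((key _).1 β.2).1⟩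
    left_inv := fun α => Subtype.ext (Fin.init_snoc (α := fun _ => ℕ) _ _)
    right_inv := fun β => Subtype.ext <| by
      have hβ := ((key _).1 β.2).2
      change Fin.snoc (α := fun _ => ℕ) (Fin.init β.1) (β.1 (Fin.last (m + 1)).castSucc) = β.1
      rw [← hβ]
      exact Fin.snoc_init_self β.1
    map_add' := fun α α' => Subtype.ext <| funext fun i => by
      induction i using Fin.lastCases <;> simp }⟩

/-- Remark 4.8: if `g_{m-1} = g_m` then `ℬ(g) ≅ ℬ(h)` where `h` is the
sequence over `H = G × ℤ` given by `h_i = (g_i, 0)` for `i ≤ m-1`, `h_m = (g_{m-1}, 1)`,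
`h_{m+1} = (1_G, -1)`. (Indices are 0-based below: `g` has length `m+2`.) -/
theorem block_repetition_remove (G : Type) [CommGroup G] (m : ℕ) (g : Fin (m + 2) → G)
    (hg : g ⟨m, by omega⟩ = g ⟨m + 1, by omega⟩) :
    Nonempty (↥(BlockT g) ≃+ ↥(BlockT (fun i : Fin (m + 3) =>
      if h : (i : ℕ) ≤ m then
        ((g ⟨(i : ℕ), by omega⟩, Multiplicative.ofAdd (0 : ℤ)) : G × Multiplicative ℤ)
      else if (i : ℕ) = m + 1 then (g ⟨m, by omega⟩, Multiplicative.ofAdd (1 : ℤ))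
      else (1, Multiplicative.ofAdd (-1 : ℤ))))) := by
  apply block_equiv_of_extension
  · intro i
    have hi : (i : ℕ) ≤ m := by omega
    simp only [Fin.val_castSucc, dif_pos hi, ofAdd_zero]
    rfl
  · have hlast : g (Fin.last (m + 1)) = g ⟨m, by omega⟩ := hg.symm
    simp [hlast]
  · simp
end

section
/- Let M be a finitely generated free commutative monoid with an admissible total order ≺, and let ∼ be a semigroup congruence on M. If Λ ⊆ M × M is a Gröbner system of ∼, then Λ generates the congruence ∼. -/
/-- By Dickson's lemma an admissible order is well-founded: an admissible order refines the
componentwise order, so an infinite descending chain would be a bad sequence. -/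
lemma IsAdmissible.wellFounded {n : ℕ} {lt : (Fin n → ℕ) → (Fin n → ℕ) → Prop}
    (h : IsAdmissible lt) : WellFounded lt := by
  obtain ⟨-, htrans, hirr, hadd, hpos⟩ := h
  have hle : ∀ x y, x ≤ y → ¬ lt y x := by
    intro x y hxy hlt
    obtain ⟨u, rfl⟩ := exists_add_of_le hxy
    rcases eq_or_ne u 0 with rfl | hu
    · exact hirr x (by simpa using hlt)
    · have h1 := hadd 0 u x (hpos u hu)
      rw [zero_add, add_comm] at h1
      exact hirr x (htrans _ _ _ h1 hlt)
  have : IsStrictOrder (Fin n → ℕ) lt := { irrefl := hirr, trans := htrans }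
  rw [RelEmbedding.wellFounded_iff_isEmpty]
  refine ⟨fun f => ?_⟩
  obtain ⟨i, j, hij, hf⟩ := wellQuasiOrdered_le (fun k => f k)
  exact hle _ _ hf (f.map_rel_iff.2 hij)

/-- Each `x` is related by the congruence generated by `Λ` to an element divisible by no left
side of `Λ`: as long as `x = p.1 + u` with `p ∈ Λ`, replace `x` by the smaller `p.2 + u`. -/
lemma IsGroebnerSystem.exists_reduced {n : ℕ} {lt : (Fin n → ℕ) → (Fin n → ℕ) → Prop}
    (hadm : IsAdmissible lt) {c : AddCon (Fin n → ℕ)}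
    {Λ : Set ((Fin n → ℕ) × (Fin n → ℕ))} (hΛ : IsGroebnerSystem lt c Λ) (x : Fin n → ℕ) :
    ∃ z, addConGen (fun x y => (x, y) ∈ Λ) x z ∧ ∀ p ∈ Λ, ¬ ∃ u, z = p.1 + u := by
  induction x using hadm.wellFounded.induction with
  | _ x ih =>
    by_cases hx : ∀ p ∈ Λ, ¬ ∃ u, x = p.1 + u
    · exact ⟨x, AddCon.refl _ x, hx⟩
    · push Not at hx
      obtain ⟨p, hp, u, rfl⟩ := hx
      obtain ⟨-, -, -, hadd, -⟩ := hadm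
      obtain ⟨z, hz, hred⟩ := ih (p.2 + u) (hadd _ _ u (hΛ.2.1 p hp).2)
      have hstep : addConGen (fun x y => (x, y) ∈ Λ) (p.1 + u) (p.2 + u) :=
        AddCon.add _ (AddConGen.Rel.of _ _ hp) (AddCon.refl _ u)
      exact ⟨z, AddCon.trans _ hstep hz, hred⟩

/-- Proposition 5.2 (i): a Gröbner system of a semigroup congruence on a
finitely generated free commutative monoid generates the congruence. -/
theorem groebner_system_generates (n : ℕ) (lt : (Fin n → ℕ) → (Fin n → ℕ) → Prop)
    (hadm : IsAdmissible lt) (c : AddCon (Fin n → ℕ))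
    (Λ : Set ((Fin n → ℕ) × (Fin n → ℕ))) (hΛ : IsGroebnerSystem lt c Λ) :
    addConGen (fun x y => (x, y) ∈ Λ) = c := by
  have hle : addConGen (fun x y => (x, y) ∈ Λ) ≤ c :=
    AddCon.addConGen_le.2 fun x y hxy => (hΛ.2.1 (x, y) hxy).1
  refine le_antisymm hle fun {x y} hxy => ?_
  obtain ⟨z, hxz, hz⟩ := hΛ.exists_reduced hadm x
  obtain ⟨w, hyw, hw⟩ := hΛ.exists_reduced hadm y
  have hzw : c z w := c.trans (c.symm (hle hxz)) (c.trans hxy (hle hyw))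
  have heq : z = w := by
    obtain ⟨-, htrans, hirr, -, -⟩ := hadm
    -- Both `z` and `w` are minimal in their common `c`-class.
    rcases hΛ.2.2 z hz w hzw with h | h
    · exact h
    · rcases hΛ.2.2 w hw z (c.symm hzw) with h' | h'
      · exact h'.symm
      · exact absurd (htrans _ _ _ h h') (hirr z)
  subst heq
  exact AddCon.trans _ hxz (AddCon.symm _ hyw)
end

section
/- Let M be a finitely generated free commutative monoid with an admissible total order ≺. Then every finitely generated semigroup congruence ∼ on M has a Gröbner system. -/
/-- Proposition 5.2 (ii): every finitely generated semigroup congruence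
on a finitely generated free commutative monoid has a Gröbner system. -/
theorem groebner_system_exists (n : ℕ) (lt : (Fin n → ℕ) → (Fin n → ℕ) → Prop)
    (hadm : IsAdmissible lt) (c : AddCon (Fin n → ℕ))
    (hfg : ∃ Gen : Set ((Fin n → ℕ) × (Fin n → ℕ)), Gen.Finite ∧
      addConGen (fun x y => (x, y) ∈ Gen) = c) :
    ∃ Λ : Set ((Fin n → ℕ) × (Fin n → ℕ)), IsGroebnerSystem lt c Λ := by
  obtain ⟨htot, -⟩ := hadm
  let A : Set (Fin n → ℕ) := {z | ∃ y, c z y ∧ lt y z}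
  have hA : ∀ z : Fin n → ℕ, ∃ y, z ∈ A → c z y ∧ lt y z := fun z => by
    by_cases hz : z ∈ A
    · obtain ⟨y, hy⟩ := hz
      exact ⟨y, fun _ => hy⟩
    · exact ⟨0, fun h => absurd h hz⟩
  choose f hf using hA
  -- Dickson's lemma
  have hfin : {x | Minimal (· ∈ A) x}.Finite :=
    (setOfPred_minimal_antichain (· ∈ A)).finite_of_wellQuasiOrdered wellQuasiOrdered_le
  refine ⟨(fun x => (x, f x)) '' {x | Minimal (· ∈ A) x}, hfin.image _, ?_, ?_⟩
  · rintro _ ⟨x, hx, rfl⟩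
    exact hf x hx.prop
  · intro z hz y hzy
    rcases htot z y with h | h | h
    · exact Or.inr h
    · exact Or.inl h
    · obtain ⟨m, hmz, hm⟩ := exists_minimal_le_of_wellFoundedLT (· ∈ A) z ⟨y, hzy, h⟩
      exact absurd (exists_add_of_le hmz) (hz _ ⟨m, hm, rfl⟩)
end
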